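/- For every δ ∈ (0, 1/64), in the instance J_δ: the uncertainty level satisfies d(C) = δ; there exists a menu of two deterministic contracts Π with R(Π) ≤ √δ/10; and every randomized contract γ satisfies R(γ) ≥ √δ/9. -/

import Mathlib

open Finset

variable {A Ω : Type} [Fintype A] [Fintype Ω] [Nonempty A] [Nonempty Ω]

/-- Agent's expected utility `U^a(p,c,a)` of action `a` under contract `p` and costs `c`. -/
noncomputable def Uag (F : A → Ω → ℝ) (p : Ω → ℝ) (c : A → ℝ) (a : A) : ℝ :=
  (∑ ω, F a ω * p ω) - c a

/-- Principal's expected utility when the agent plays action `a` under contract `p`. -/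
noncomputable def prinAct (F : A → Ω → ℝ) (r p : Ω → ℝ) (a : A) : ℝ :=
  ∑ ω, F a ω * (r ω - p ω)

/-- Principal's expected utility `U^p(p,c)`: the agent plays a best response,
with ties among best responses broken in favor of the principal. -/
noncomputable def Uprin (F : A → Ω → ℝ) (r p : Ω → ℝ) (c : A → ℝ) : ℝ :=
  sSup { x | ∃ a : A, (∀ a' : A, Uag F p c a' ≤ Uag F p c a) ∧ x = prinAct F r p a }

/-- A deterministic contract: nonnegative payments. -/
def IsContract (p : Ω → ℝ) : Prop := ∀ ω, 0 ≤ p ω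

/-- `OPT(c)`: the supremum over contracts of the principal's expected utility against `c`. -/
noncomputable def OPT (F : A → Ω → ℝ) (r : Ω → ℝ) (c : A → ℝ) : ℝ :=
  sSup { x | ∃ p : Ω → ℝ, IsContract p ∧ x = Uprin F r p c }

/-- The regret `R(p)` of a deterministic contract `p`. -/
noncomputable def regret (F : A → Ω → ℝ) (r : Ω → ℝ) (C : Set (A → ℝ)) (p : Ω → ℝ) : ℝ :=
  sSup { x | ∃ c ∈ C, x = OPT F r c - Uprin F r p c }

/-- Uncertainty level `d(C)`: the L∞-diameter of the uncertainty set. -/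
noncomputable def uncLevel (C : Set (A → ℝ)) : ℝ :=
  sSup { x | ∃ c ∈ C, ∃ c' ∈ C, x = ‖c - c'‖ }

/-- The assumptions defining a principal–agent instance `(A, Ω, r, C, F)`. -/
structure IsPAInstance (F : A → Ω → ℝ) (r : Ω → ℝ) (C : Set (A → ℝ)) : Prop where
  r_mem : ∀ ω, r ω ∈ Set.Icc (0:ℝ) 1
  F_mem : ∀ a ω, F a ω ∈ Set.Icc (0:ℝ) 1
  F_sum : ∀ a, ∑ ω, F a ω = 1
  C_nonempty : C.Nonempty
  C_mem : ∀ c ∈ C, ∀ a, c a ∈ Set.Icc (0:ℝ) 1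
  zero_action : ∃ a : A, ∀ c ∈ C, c a = 0

/-- The agent's best-response utility under contract `p`. -/
noncomputable def agentBest (F : A → Ω → ℝ) (p : Ω → ℝ) (c : A → ℝ) : ℝ :=
  ⨆ a : A, Uag F p c a

/-- Principal's expected utility `U^p(Π,c)` under a menu of deterministic contracts:
the agent selects an element maximizing its own utility, breaking ties in favor of
the principal. -/
noncomputable def UprinMenu (F : A → Ω → ℝ) (r : Ω → ℝ) {K : ℕ} (m : Fin K → Ω → ℝ)
    (c : A → ℝ) : ℝ :=
  sSup { x | ∃ i : Fin K, (∀ j : Fin K, agentBest F (m j) c ≤ agentBest F (m i) c) ∧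
    x = Uprin F r (m i) c }

/-- The regret `R(Π)` of a menu of deterministic contracts. -/
noncomputable def regretMenu (F : A → Ω → ℝ) (r : Ω → ℝ) (C : Set (A → ℝ)) {K : ℕ}
    (m : Fin K → Ω → ℝ) : ℝ :=
  sSup { x | ∃ c ∈ C, x = OPT F r c - UprinMenu F r m c }

/-- A randomized contract: a finitely supported probability distribution over
deterministic contracts, represented as a finite tuple of contracts with probabilities. -/
structure RandCon (Ω : Type) where
  n : ℕ
  ps : Fin n → Ω → ℝ
  q : Fin n → ℝ
  q_nonneg : ∀ i, 0 ≤ q i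
  q_sum : ∑ i, q i = 1

/-- All the contracts in the support are genuine (nonnegative) contracts. -/
def RandCon.valid {Ω : Type} (γ : RandCon Ω) : Prop := ∀ i ω, 0 ≤ γ.ps i ω

/-- Agent's expected utility `U^a(γ,c)` of a randomized contract. -/
noncomputable def UagRand (F : A → Ω → ℝ) (γ : RandCon Ω) (c : A → ℝ) : ℝ :=
  ∑ i, γ.q i * (⨆ a : A, Uag F (γ.ps i) c a)

/-- Principal's expected utility `U^p(γ,c)` of a randomized contract. -/
noncomputable def UprinRand (F : A → Ω → ℝ) (r : Ω → ℝ) (γ : RandCon Ω) (c : A → ℝ) : ℝ :=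
  ∑ i, γ.q i * Uprin F r (γ.ps i) c

/-- The regret `R(γ)` of a randomized contract. -/
noncomputable def regretRand (F : A → Ω → ℝ) (r : Ω → ℝ) (C : Set (A → ℝ))
    (γ : RandCon Ω) : ℝ :=
  sSup { x | ∃ c ∈ C, x = OPT F r c - UprinRand F r γ c }

/-- Principal's expected utility `U^p(Γ,c)` under a menu of randomized contracts:
the agent selects an element maximizing its own expected utility, breaking ties in
favor of the principal. -/
noncomputable def UprinRMenu (F : A → Ω → ℝ) (r : Ω → ℝ) {K : ℕ} (Γ : Fin K → RandCon Ω)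
    (c : A → ℝ) : ℝ :=
  sSup { x | ∃ i : Fin K, (∀ j : Fin K, UagRand F (Γ j) c ≤ UagRand F (Γ i) c) ∧
    x = UprinRand F r (Γ i) c }

/-- The regret `R(Γ)` of a menu of randomized contracts. -/
noncomputable def regretRMenu (F : A → Ω → ℝ) (r : Ω → ℝ) (C : Set (A → ℝ)) {K : ℕ}
    (Γ : Fin K → RandCon Ω) : ℝ :=
  sSup { x | ∃ c ∈ C, x = OPT F r c - UprinRMenu F r Γ c }

/-!
Write `s = √δ` and `b = 2s / (10 + 5s)`. Whenever `a₁` or `a₃` has the extra cost `δ`, inducing it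
rather than `a₂` or `a₄` takes a payment of at least `s`. So under `c¹` the principal's best option
is to induce `a₁`, which has to beat the free action `a₅`; this takes a payment of at least `b`,
the solution of `b - s/10 = (1/2 - s/4) b`. Hence `OPT(c¹) = OPT(c²) = 1 - b`, while
`OPT(c³) = 1 - s/2` is reached by paying nothing, which induces `a₅`.

In the menu of the two contracts paying `b` on `ω₁` only and on `ω₂` only, every agent is
indifferent between the contracts: `a₅` yields the agent `b - s/10` under both, and nothing does
better. Ties being broken for the principal, the menu is optimal against `c¹` and `c²`, and against
`c³` it only loses the expected payment `b - s/10 ≤ s/10`.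

Without a menu, average the regret over costs drawn with probabilities `1/4, 1/4, 1/2`. A contract
inducing `a₁` under `c¹` or `a₃` under `c²` wastes at least `b - s/10` under `c³`, and one doing
both has to pay `p₁ + p₂ ≥ 2/5`. So no contract has average regret below `s/9`, and by linearity no
randomized contract does.
-/

section PrincipalAgent

variable {Act Out : Type} [Fintype Out] {F : Act → Out → ℝ} {r p : Out → ℝ} {c : Act → ℝ}

/-- The action `a` belongs to the best-response set `A*(p, c)`. -/
def IsBestResponse (F : Act → Out → ℝ) (p : Out → ℝ) (c : Act → ℝ) (a : Act) : Prop :=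
  ∀ a', Uag F p c a' ≤ Uag F p c a

theorem prinAct_le_Uprin [Finite Act] {a : Act} (ha : IsBestResponse F p c a) :
    prinAct F r p a ≤ Uprin F r p c := by
  refine le_csSup ((Set.finite_range (prinAct F r p)).subset ?_).bddAbove ⟨a, ha, rfl⟩
  rintro _ ⟨a', -, rfl⟩
  exact ⟨a', rfl⟩

theorem exists_isBestResponse_Uprin_eq [Finite Act] [Nonempty Act] (F : Act → Out → ℝ)
    (r p : Out → ℝ) (c : Act → ℝ) :
    ∃ a, IsBestResponse F p c a ∧ Uprin F r p c = prinAct F r p a := by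
  obtain ⟨a, ha⟩ := Finite.exists_max (Uag F p c)
  have hne : {x | ∃ a, IsBestResponse F p c a ∧ x = prinAct F r p a}.Nonempty := ⟨_, a, ha, rfl⟩
  refine hne.csSup_mem ((Set.finite_range (prinAct F r p)).subset ?_)
  rintro _ ⟨a', -, rfl⟩
  exact ⟨a', rfl⟩

theorem OPT_eq_of_forall_Uprin_le {B : ℝ} (hp : IsContract p) (hB : B ≤ Uprin F r p c)
    (hle : ∀ p', IsContract p' → Uprin F r p' c ≤ B) : OPT F r c = B := by
  refine IsGreatest.csSup_eq ⟨⟨p, hp, hB.antisymm (hle p hp)⟩, ?_⟩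
  rintro _ ⟨p', hp', rfl⟩
  exact hle p' hp'

theorem agentBest_eq_of_isBestResponse [Nonempty Act] {a : Act} (ha : IsBestResponse F p c a) :
    agentBest F p c = Uag F p c a :=
  (ciSup_le ha).antisymm (le_ciSup ⟨_, Set.forall_mem_range.2 ha⟩ a)

theorem Uprin_le_UprinMenu {K : ℕ} {m : Fin K → Out → ℝ} {i : Fin K}
    (hi : ∀ j, agentBest F (m j) c ≤ agentBest F (m i) c) :
    Uprin F r (m i) c ≤ UprinMenu F r m c := by
  refine le_csSup ((Set.finite_range fun j => Uprin F r (m j) c).subset ?_).bddAbove ⟨i, hi, rfl⟩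
  rintro _ ⟨j, -, rfl⟩
  exact ⟨j, rfl⟩

theorem regretMenu_le {C : Set (Act → ℝ)} {K : ℕ} {m : Fin K → Out → ℝ} {B : ℝ}
    (hC : C.Nonempty) (h : ∀ c ∈ C, OPT F r c - UprinMenu F r m c ≤ B) :
    regretMenu F r C m ≤ B := by
  obtain ⟨c₀, hc₀⟩ := hC
  refine csSup_le ⟨_, c₀, hc₀, rfl⟩ ?_
  rintro _ ⟨c, hc, rfl⟩
  exact h c hc

theorem OPT_sub_UprinRand_le_regretRand {C : Set (Act → ℝ)} (hC : C.Finite) (hc : c ∈ C)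
    (γ : RandCon Out) : OPT F r c - UprinRand F r γ c ≤ regretRand F r C γ := by
  refine le_csSup ((hC.image fun c => OPT F r c - UprinRand F r γ c).subset ?_).bddAbove
    ⟨c, hc, rfl⟩
  rintro _ ⟨c', hc', rfl⟩
  exact ⟨c', hc', rfl⟩

theorem sum_mul_OPT_sub_UprinRand {ι : Type*} [Fintype ι] (w : ι → ℝ) (k : ι → Act → ℝ)
    (γ : RandCon Out) :
    ∑ t, w t * (OPT F r (k t) - UprinRand F r γ (k t)) =
      ∑ i, γ.q i * ∑ t, w t * (OPT F r (k t) - Uprin F r (γ.ps i) (k t)) := by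
  have regret_eq (t : ι) : OPT F r (k t) - UprinRand F r γ (k t) =
      ∑ i, γ.q i * (OPT F r (k t) - Uprin F r (γ.ps i) (k t)) := by
    simp only [UprinRand, mul_sub, sum_sub_distrib, ← sum_mul, γ.q_sum, one_mul]
  simp only [regret_eq, mul_sum]
  rw [sum_comm]
  exact sum_congr rfl fun i _ => sum_congr rfl fun t _ => mul_left_comm _ _ _

/-- The easy half of Yao's minimax principle. -/
theorem le_regretRand_of_forall_le_average {C : Set (Act → ℝ)} (hC : C.Finite) {ι : Type*}
    [Fintype ι] {w : ι → ℝ} (hw : ∀ t, 0 ≤ w t) (hw_sum : ∑ t, w t = 1) {k : ι → Act → ℝ}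
    (hk : ∀ t, k t ∈ C) {B : ℝ}
    (hB : ∀ p, IsContract p → B ≤ ∑ t, w t * (OPT F r (k t) - Uprin F r p (k t)))
    {γ : RandCon Out} (hγ : γ.valid) : B ≤ regretRand F r C γ :=
  calc
    B = ∑ i, γ.q i * B := by rw [← sum_mul, γ.q_sum, one_mul]
    _ ≤ ∑ i, γ.q i * ∑ t, w t * (OPT F r (k t) - Uprin F r (γ.ps i) (k t)) :=
      sum_le_sum fun i _ => mul_le_mul_of_nonneg_left (hB _ (hγ i)) (γ.q_nonneg i)
    _ = ∑ t, w t * (OPT F r (k t) - UprinRand F r γ (k t)) := (sum_mul_OPT_sub_UprinRand ..).symm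
    _ ≤ ∑ t, w t * regretRand F r C γ := sum_le_sum fun t _ =>
      mul_le_mul_of_nonneg_left (OPT_sub_UprinRand_le_regretRand hC (hk t) γ) (hw t)
    _ = regretRand F r C γ := by rw [← sum_mul, hw_sum, one_mul]

theorem uncLevel_eq_of_forall_norm_sub_le [Fintype Act] {C : Set (Act → ℝ)} {d : ℝ}
    {c₁ c₂ : Act → ℝ} (hc₁ : c₁ ∈ C) (hc₂ : c₂ ∈ C) (hd : ‖c₁ - c₂‖ = d)
    (hle : ∀ c ∈ C, ∀ c' ∈ C, ‖c - c'‖ ≤ d) : uncLevel C = d := by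
  refine IsGreatest.csSup_eq ⟨⟨c₁, hc₁, c₂, hc₂, hd.symm⟩, ?_⟩
  rintro _ ⟨c, hc, c', hc', rfl⟩
  exact hle c hc c' hc'

section Relabeling

variable {Act' Out' : Type} [Fintype Out'] {F' : Act' → Out' → ℝ} (e : Act' ≃ Act) (f : Out' ≃ Out)

theorem Uag_relabel (hF : ∀ a ω, F' a ω = F (e a) (f ω)) (a : Act') :
    Uag F' (p ∘ f) (c ∘ e) a = Uag F p c (e a) := by
  simp only [Uag, hF, Function.comp_apply]
  rw [f.sum_comp fun ω => F (e a) ω * p ω]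

theorem prinAct_relabel (hF : ∀ a ω, F' a ω = F (e a) (f ω)) (a : Act') :
    prinAct F' (r ∘ f) (p ∘ f) a = prinAct F r p (e a) := by
  simp only [prinAct, hF, Function.comp_apply]
  exact f.sum_comp fun ω => F (e a) ω * (r ω - p ω)

theorem Uprin_relabel (hF : ∀ a ω, F' a ω = F (e a) (f ω)) :
    Uprin F' (r ∘ f) (p ∘ f) (c ∘ e) = Uprin F r p c := by
  simp only [Uprin, Uag_relabel e f hF, prinAct_relabel e f hF, e.surjective.exists,
    e.surjective.forall]

theorem OPT_relabel (hF : ∀ a ω, F' a ω = F (e a) (f ω)) :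
    OPT F' (r ∘ f) (c ∘ e) = OPT F r c := by
  have isContract_comp (p : Out → ℝ) : IsContract (p ∘ f) ↔ IsContract p :=
    (f.surjective.forall (p := fun ω => 0 ≤ p ω)).symm
  have surjective_comp : Function.Surjective fun p : Out → ℝ => p ∘ f :=
    f.injective.surjective_comp_right
  simp only [OPT, surjective_comp.exists, isContract_comp, Uprin_relabel e f hF]

theorem agentBest_relabel (hF : ∀ a ω, F' a ω = F (e a) (f ω)) :
    agentBest F' (p ∘ f) (c ∘ e) = agentBest F p c := by
  simp only [agentBest, Uag_relabel e f hF]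
  exact e.iSup_comp

end Relabeling

end PrincipalAgent

namespace MenuInstance

/-- The outcome probabilities of `J_δ` with `s` in place of `√δ`. Actions and outcomes are indexed
from `0`, so `a₁, …, a₅` are `0, …, 4` and `ω₁, ω₂, ω₃` are `0, 1, 2`. -/
noncomputable def outcomeProb (s : ℝ) : Fin 5 → Fin 3 → ℝ :=
  ![![1, 0, 0], ![1 - s, 0, s], ![0, 1, 0], ![0, 1 - s, s], ![1 / 2 - s / 4, 1 / 2 - s / 4, s / 2]]

/-- The rewards of `J_δ`. -/
def reward : Fin 3 → ℝ := ![1, 1, 0]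

/-- The cost vectors of `J_δ`, where `u` and `v` are the uncertain costs of `a₁` and `a₃`. -/
noncomputable def costs (s u v : ℝ) : Fin 5 → ℝ := ![u, s / 10, v, s / 10, 0]

/-- The uncertainty set `{c¹, c², c³}` of `J_δ`, with `s` in place of `√δ` and the extra cost `δ` as
an independent parameter. -/
def costSet (s δ : ℝ) : Set (Fin 5 → ℝ) :=
  {costs s (s / 10) (s / 10 + δ), costs s (s / 10 + δ) (s / 10), costs s (s / 10 + δ) (s / 10 + δ)}

/-- The least payment on `ω₁` with which `a₁`, at cost `s / 10`, matches `a₅` for the agent. -/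
noncomputable def minPayment (s : ℝ) : ℝ := 2 * s / (10 + 5 * s)

variable {s δ u v : ℝ} {p : Fin 3 → ℝ}

section MinPayment

theorem one_half_add_mul_minPayment (hs : 0 < s) : (1 / 2 + s / 4) * minPayment s = s / 10 := by
  unfold minPayment
  field

theorem one_half_sub_mul_minPayment (hs : 0 < s) :
    (1 / 2 - s / 4) * minPayment s = minPayment s - s / 10 := by
  linarith [one_half_add_mul_minPayment hs]

theorem minPayment_nonneg (hs : 0 < s) : 0 ≤ minPayment s := by
  unfold minPayment
  positivity

theorem minPayment_le (hs : 0 < s) : minPayment s ≤ s / 5 := by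
  rw [minPayment, div_le_iff₀ (by linarith)]
  nlinarith

theorem le_minPayment (hs : 0 < s) (hs' : s ≤ 3 / 4) : 8 / 55 * s ≤ minPayment s := by
  rw [minPayment, le_div_iff₀ (by linarith)]
  nlinarith

theorem minPayment_le_of_mul_le {x : ℝ} (hs : 0 < s) (h : s / 10 ≤ (1 / 2 + s / 4) * x) :
    minPayment s ≤ x :=
  le_of_mul_le_mul_left ((one_half_add_mul_minPayment hs).trans_le h) (by linarith)

theorem isContract_single_minPayment (hs : 0 < s) (ω : Fin 3) :
    IsContract (Pi.single ω (minPayment s)) :=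
  Pi.single_nonneg (α := fun _ => ℝ) |>.2 (minPayment_nonneg hs)

end MinPayment

theorem norm_costs_sub_costs (s u v u' v' : ℝ) :
    ‖costs s u v - costs s u' v'‖ = max |u - u'| |v - v'| := by
  refine le_antisymm ((pi_norm_le_iff_of_nonneg (by positivity)).2 fun a => ?_) (max_le ?_ ?_)
  · fin_cases a <;> simp [costs]
  · simpa [costs] using norm_le_pi_norm (costs s u v - costs s u' v') 0
  · simpa [costs] using norm_le_pi_norm (costs s u v - costs s u' v') 2

theorem uncLevel_costSet (s : ℝ) (hδ : 0 ≤ δ) : uncLevel (costSet s δ) = δ := by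
  refine uncLevel_eq_of_forall_norm_sub_le (c₁ := costs s (s / 10) (s / 10 + δ))
    (c₂ := costs s (s / 10 + δ) (s / 10)) (by simp [costSet]) (by simp [costSet]) ?_ ?_
  · simp [norm_costs_sub_costs, abs_of_nonneg hδ]
  · rintro _ (rfl | rfl | rfl) _ (rfl | rfl | rfl) <;>
      simp [norm_costs_sub_costs, abs_of_nonneg hδ, hδ]

theorem Uag_costs (s u v : ℝ) (p : Fin 3 → ℝ) :
    Uag (outcomeProb s) p (costs s u v) =
      ![p 0 - u, (1 - s) * p 0 + s * p 2 - s / 10, p 1 - v, (1 - s) * p 1 + s * p 2 - s / 10,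
        (1 / 2 - s / 4) * (p 0 + p 1) + s / 2 * p 2] := by
  ext a
  fin_cases a <;> simp [Uag, outcomeProb, costs, Fin.sum_univ_three]; ring

theorem prinAct_reward (s : ℝ) (p : Fin 3 → ℝ) :
    prinAct (outcomeProb s) reward p =
      ![1 - p 0, (1 - s) * (1 - p 0) - s * p 2, 1 - p 1, (1 - s) * (1 - p 1) - s * p 2,
        1 - s / 2 - ((1 / 2 - s / 4) * (p 0 + p 1) + s / 2 * p 2)] := by
  ext a
  fin_cases a <;> simp [prinAct, outcomeProb, reward, Fin.sum_univ_three] <;> ring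

section Symmetry

/-- The relabeling of actions that exchanges `a₁` with `a₃` and `a₂` with `a₄`; together with
exchanging `ω₁` and `ω₂` it preserves the instance and exchanges `c¹` with `c²`. -/
def swapActions : Equiv.Perm (Fin 5) := Equiv.swap 0 2 * Equiv.swap 1 3

theorem outcomeProb_swap (s : ℝ) (a : Fin 5) (ω : Fin 3) :
    outcomeProb s a ω = outcomeProb s (swapActions a) (Equiv.swap 0 1 ω) := by
  fin_cases a <;> fin_cases ω <;> rfl

theorem costs_comp_swapActions (s u v : ℝ) : costs s u v ∘ swapActions = costs s v u := by
  ext a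
  fin_cases a <;> rfl

theorem reward_comp_swap : reward ∘ Equiv.swap 0 1 = reward := by
  ext ω
  fin_cases ω <;> rfl

theorem Uprin_swap (s u v : ℝ) (p : Fin 3 → ℝ) :
    Uprin (outcomeProb s) reward (p ∘ Equiv.swap 0 1) (costs s v u) =
      Uprin (outcomeProb s) reward p (costs s u v) := by
  rw [← Uprin_relabel (p := p) swapActions (Equiv.swap 0 1) (outcomeProb_swap s),
    reward_comp_swap, costs_comp_swapActions]

theorem OPT_swap (s u v : ℝ) :
    OPT (outcomeProb s) reward (costs s u v) = OPT (outcomeProb s) reward (costs s v u) := by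
  rw [← OPT_relabel swapActions (Equiv.swap 0 1) (outcomeProb_swap s), reward_comp_swap,
    costs_comp_swapActions]

theorem agentBest_swap (s u v : ℝ) (p : Fin 3 → ℝ) :
    agentBest (outcomeProb s) (p ∘ Equiv.swap 0 1) (costs s v u) =
      agentBest (outcomeProb s) p (costs s u v) := by
  rw [← agentBest_relabel (p := p) swapActions (Equiv.swap 0 1) (outcomeProb_swap s),
    costs_comp_swapActions]

theorem single_zero_comp_swap (x : ℝ) :
    (Pi.single 0 x : Fin 3 → ℝ) ∘ Equiv.swap 0 1 = Pi.single 1 x := by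
  ext ω
  fin_cases ω <;> rfl

end Symmetry

section UpperBounds

theorem cost_add_le_of_isBestResponse_zero (hs : 0 < s) (hp : IsContract p)
    (h : IsBestResponse (outcomeProb s) p (costs s u v) 0) :
    u + (1 / 2 - s / 4) * p 1 ≤ (1 / 2 + s / 4) * p 0 := by
  have beats_four : (1 / 2 - s / 4) * (p 0 + p 1) + s / 2 * p 2 ≤ p 0 - u := by
    simpa [Uag_costs] using h 4
  linarith [mul_nonneg hs.le (hp 2)]

theorem le_payment_of_isBestResponse_zero (hs : 0 < s) (hδ : s ^ 2 ≤ δ) (hp : IsContract p)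
    (h : IsBestResponse (outcomeProb s) p (costs s (s / 10 + δ) v) 0) : s ≤ p 0 := by
  have beats_one : (1 - s) * p 0 + s * p 2 - s / 10 ≤ p 0 - (s / 10 + δ) := by
    simpa [Uag_costs] using h 1
  refine le_of_mul_le_mul_left ?_ hs
  linarith [mul_nonneg hs.le (hp 2)]

theorem le_payment_of_isBestResponse_two (hs : 0 < s) (hδ : s ^ 2 ≤ δ) (hp : IsContract p)
    (h : IsBestResponse (outcomeProb s) p (costs s u (s / 10 + δ)) 2) : s ≤ p 1 := by
  have beats_three : (1 - s) * p 1 + s * p 2 - s / 10 ≤ p 1 - (s / 10 + δ) := by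
    simpa [Uag_costs] using h 3
  refine le_of_mul_le_mul_left ?_ hs
  linarith [mul_nonneg hs.le (hp 2)]

theorem Uprin_costs_cases (hs : 0 < s) (hs1 : s ≤ 1) (hp : IsContract p) (u v : ℝ) :
    Uprin (outcomeProb s) reward p (costs s u v) ≤ 1 - s ∨
    Uprin (outcomeProb s) reward p (costs s u v) ≤ 1 - s / 2 - (1 / 2 - s / 4) * (p 0 + p 1) ∨
    (Uprin (outcomeProb s) reward p (costs s u v) = 1 - p 0 ∧
      IsBestResponse (outcomeProb s) p (costs s u v) 0) ∨
    (Uprin (outcomeProb s) reward p (costs s u v) = 1 - p 1 ∧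
      IsBestResponse (outcomeProb s) p (costs s u v) 2) := by
  obtain ⟨a, ha, hU⟩ := exists_isBestResponse_Uprin_eq (outcomeProb s) reward p (costs s u v)
  have waste_one : 0 ≤ (1 - s) * p 0 := mul_nonneg (sub_nonneg.2 hs1) (hp 0)
  have waste_three : 0 ≤ (1 - s) * p 1 := mul_nonneg (sub_nonneg.2 hs1) (hp 1)
  have waste_two : 0 ≤ s * p 2 := mul_nonneg hs.le (hp 2)
  rw [hU, prinAct_reward]
  fin_cases a
  · exact .inr (.inr (.inl ⟨rfl, ha⟩))
  · refine .inl ?_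
    change (1 - s) * (1 - p 0) - s * p 2 ≤ 1 - s
    linarith
  · exact .inr (.inr (.inr ⟨rfl, ha⟩))
  · refine .inl ?_
    change (1 - s) * (1 - p 1) - s * p 2 ≤ 1 - s
    linarith
  · refine .inr (.inl ?_)
    change 1 - s / 2 - ((1 / 2 - s / 4) * (p 0 + p 1) + s / 2 * p 2) ≤ _
    linarith

theorem Uprin_cheap_expensive_le_or (hs : 0 < s) (hs1 : s ≤ 1) (hδ : s ^ 2 ≤ δ)
    (hp : IsContract p) :
    Uprin (outcomeProb s) reward p (costs s (s / 10) (s / 10 + δ)) ≤ 1 - s / 2 ∨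
    (Uprin (outcomeProb s) reward p (costs s (s / 10) (s / 10 + δ)) ≤ 1 - p 0 ∧
      s / 10 + (1 / 2 - s / 4) * p 1 ≤ (1 / 2 + s / 4) * p 0) := by
  have hT : 0 ≤ (1 / 2 - s / 4) * (p 0 + p 1) :=
    mul_nonneg (by linarith) (add_nonneg (hp 0) (hp 1))
  rcases Uprin_costs_cases hs hs1 hp (s / 10) (s / 10 + δ) with hU | hU | ⟨hU, h⟩ | ⟨hU, h⟩
  · exact .inl (by linarith)
  · exact .inl (by linarith)
  · exact .inr ⟨hU.le, cost_add_le_of_isBestResponse_zero hs hp h⟩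
  · exact .inl (by linarith [le_payment_of_isBestResponse_two hs hδ hp h])

theorem Uprin_expensive_cheap_le_or (hs : 0 < s) (hs1 : s ≤ 1) (hδ : s ^ 2 ≤ δ)
    (hp : IsContract p) :
    Uprin (outcomeProb s) reward p (costs s (s / 10 + δ) (s / 10)) ≤ 1 - s / 2 ∨
    (Uprin (outcomeProb s) reward p (costs s (s / 10 + δ) (s / 10)) ≤ 1 - p 1 ∧
      s / 10 + (1 / 2 - s / 4) * p 0 ≤ (1 / 2 + s / 4) * p 1) := by
  rw [← Uprin_swap]
  exact Uprin_cheap_expensive_le_or hs hs1 hδ (p := p ∘ Equiv.swap 0 1) fun ω => hp _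

theorem Uprin_expensive_expensive_le_or (hs : 0 < s) (hs1 : s ≤ 1) (hδ : s ^ 2 ≤ δ)
    (hp : IsContract p) :
    Uprin (outcomeProb s) reward p (costs s (s / 10 + δ) (s / 10 + δ)) ≤ 1 - s ∨
    Uprin (outcomeProb s) reward p (costs s (s / 10 + δ) (s / 10 + δ)) ≤
      1 - s / 2 - (1 / 2 - s / 4) * (p 0 + p 1) := by
  rcases Uprin_costs_cases hs hs1 hp (s / 10 + δ) (s / 10 + δ) with hU | hU | ⟨hU, h⟩ | ⟨hU, h⟩
  · exact .inl hU
  · exact .inr hU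
  · exact .inl (by linarith [le_payment_of_isBestResponse_zero hs hδ hp h])
  · exact .inl (by linarith [le_payment_of_isBestResponse_two hs hδ hp h])

end UpperBounds

section SinglePayment

theorem Uag_costs_single_zero (hs : 0 < s) (u v : ℝ) :
    Uag (outcomeProb s) (Pi.single 0 (minPayment s)) (costs s u v) =
      ![minPayment s - u, (1 - s) * minPayment s - s / 10, -v, -(s / 10),
        minPayment s - s / 10] := by
  rw [Uag_costs, ← one_half_sub_mul_minPayment hs]
  simp

theorem isBestResponse_four_single_zero (hs : 0 < s) (hu : s / 10 ≤ u) (hv : s / 10 ≤ v) :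
    IsBestResponse (outcomeProb s) (Pi.single 0 (minPayment s)) (costs s u v) 4 := by
  intro a
  rw [Uag_costs_single_zero hs]
  have hb := minPayment_nonneg hs
  have hsb := mul_nonneg hs.le hb
  fin_cases a <;> simp only [Fin.reduceFinMk, Fin.zero_eta, Fin.mk_one, Matrix.cons_val] <;>
    linarith

theorem isBestResponse_zero_single_zero (hs : 0 < s) (hv : s / 10 ≤ v) :
    IsBestResponse (outcomeProb s) (Pi.single 0 (minPayment s)) (costs s (s / 10) v) 0 := by
  intro a
  refine (isBestResponse_four_single_zero hs le_rfl hv a).trans_eq ?_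
  simp [Uag_costs_single_zero hs]

theorem agentBest_single_zero (hs : 0 < s) (hu : s / 10 ≤ u) (hv : s / 10 ≤ v) :
    agentBest (outcomeProb s) (Pi.single 0 (minPayment s)) (costs s u v) =
      minPayment s - s / 10 := by
  rw [agentBest_eq_of_isBestResponse (isBestResponse_four_single_zero hs hu hv),
    Uag_costs_single_zero hs]
  rfl

theorem agentBest_single_one (hs : 0 < s) (hu : s / 10 ≤ u) (hv : s / 10 ≤ v) :
    agentBest (outcomeProb s) (Pi.single 1 (minPayment s)) (costs s u v) =
      minPayment s - s / 10 := by
  rw [← single_zero_comp_swap, agentBest_swap, agentBest_single_zero hs hv hu]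

theorem one_sub_minPayment_le_Uprin_single_zero (hs : 0 < s) (hv : s / 10 ≤ v) :
    1 - minPayment s ≤
      Uprin (outcomeProb s) reward (Pi.single 0 (minPayment s)) (costs s (s / 10) v) := by
  simpa [prinAct_reward] using
    prinAct_le_Uprin (r := reward) (isBestResponse_zero_single_zero hs hv)

theorem one_sub_minPayment_le_Uprin_single_one (hs : 0 < s) (hu : s / 10 ≤ u) :
    1 - minPayment s ≤
      Uprin (outcomeProb s) reward (Pi.single 1 (minPayment s)) (costs s u (s / 10)) := by
  rw [← single_zero_comp_swap, Uprin_swap]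
  exact one_sub_minPayment_le_Uprin_single_zero hs hu

theorem one_sub_half_sub_le_Uprin_single_zero (hs : 0 < s) (hu : s / 10 ≤ u) (hv : s / 10 ≤ v) :
    1 - s / 2 - (minPayment s - s / 10) ≤
      Uprin (outcomeProb s) reward (Pi.single 0 (minPayment s)) (costs s u v) := by
  rw [← one_half_sub_mul_minPayment hs]
  simpa [prinAct_reward] using
    prinAct_le_Uprin (r := reward) (isBestResponse_four_single_zero hs hu hv)

end SinglePayment

section Optimum

theorem one_sub_half_le_Uprin_zero (hs : 0 < s) (hu : 0 ≤ u) (hv : 0 ≤ v) :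
    1 - s / 2 ≤ Uprin (outcomeProb s) reward 0 (costs s u v) := by
  have h : IsBestResponse (outcomeProb s) 0 (costs s u v) 4 := by
    intro a
    rw [Uag_costs]
    fin_cases a <;>
      simp only [Fin.reduceFinMk, Fin.zero_eta, Fin.mk_one, Matrix.cons_val, Pi.zero_apply] <;>
      linarith
  simpa [prinAct_reward] using prinAct_le_Uprin (r := reward) h

theorem OPT_cheap_expensive (hs : 0 < s) (hs1 : s ≤ 1) (hδ : s ^ 2 ≤ δ) :
    OPT (outcomeProb s) reward (costs s (s / 10) (s / 10 + δ)) = 1 - minPayment s := by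
  refine OPT_eq_of_forall_Uprin_le (isContract_single_minPayment hs 0)
    (one_sub_minPayment_le_Uprin_single_zero hs (by nlinarith)) fun p hp => ?_
  rcases Uprin_cheap_expensive_le_or hs hs1 hδ hp with hU | ⟨hU, h⟩
  · linarith [minPayment_le hs]
  · have waste : 0 ≤ (1 / 2 - s / 4) * p 1 := mul_nonneg (by linarith) (hp 1)
    linarith [minPayment_le_of_mul_le (x := p 0) hs (by linarith)]

theorem OPT_expensive_cheap (hs : 0 < s) (hs1 : s ≤ 1) (hδ : s ^ 2 ≤ δ) :
    OPT (outcomeProb s) reward (costs s (s / 10 + δ) (s / 10)) = 1 - minPayment s := by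
  rw [OPT_swap, OPT_cheap_expensive hs hs1 hδ]

theorem OPT_expensive_expensive (hs : 0 < s) (hs1 : s ≤ 1) (hδ : s ^ 2 ≤ δ) :
    OPT (outcomeProb s) reward (costs s (s / 10 + δ) (s / 10 + δ)) = 1 - s / 2 := by
  have hcost : 0 ≤ s / 10 + δ := by nlinarith
  refine OPT_eq_of_forall_Uprin_le (p := 0) (fun _ => le_rfl)
    (one_sub_half_le_Uprin_zero hs hcost hcost) fun p hp => ?_
  have hT : 0 ≤ (1 / 2 - s / 4) * (p 0 + p 1) :=
    mul_nonneg (by linarith) (add_nonneg (hp 0) (hp 1))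
  rcases Uprin_expensive_expensive_le_or hs hs1 hδ hp with hU | hU <;> linarith

end Optimum

section Menu

/-- The two contracts that pay `minPayment s` on `ω₁` only, respectively on `ω₂` only. -/
noncomputable def menu (s : ℝ) : Fin 2 → Fin 3 → ℝ :=
  ![Pi.single 0 (minPayment s), Pi.single 1 (minPayment s)]

theorem isContract_menu (hs : 0 < s) (i : Fin 2) : IsContract (menu s i) := by
  fin_cases i
  exacts [isContract_single_minPayment hs 0, isContract_single_minPayment hs 1]

theorem agentBest_menu (hs : 0 < s) (hu : s / 10 ≤ u) (hv : s / 10 ≤ v) (i : Fin 2) :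
    agentBest (outcomeProb s) (menu s i) (costs s u v) = minPayment s - s / 10 := by
  fin_cases i
  exacts [agentBest_single_zero hs hu hv, agentBest_single_one hs hu hv]

theorem Uprin_menu_le_UprinMenu (hs : 0 < s) (hu : s / 10 ≤ u) (hv : s / 10 ≤ v)
    (i : Fin 2) :
    Uprin (outcomeProb s) reward (menu s i) (costs s u v) ≤
      UprinMenu (outcomeProb s) reward (menu s) (costs s u v) :=
  Uprin_le_UprinMenu fun j => by simp only [agentBest_menu hs hu hv, le_rfl]

theorem regretMenu_menu_le (hs : 0 < s) (hs1 : s ≤ 1) (hδ : s ^ 2 ≤ δ) :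
    regretMenu (outcomeProb s) reward (costSet s δ) (menu s) ≤ s / 10 := by
  have hcost : s / 10 ≤ s / 10 + δ := by nlinarith
  refine regretMenu_le ⟨costs s (s / 10) (s / 10 + δ), by simp [costSet]⟩ ?_
  rintro _ (rfl | rfl | rfl)
  · have hU := (one_sub_minPayment_le_Uprin_single_zero hs hcost).trans
      (Uprin_menu_le_UprinMenu hs le_rfl hcost 0)
    rw [OPT_cheap_expensive hs hs1 hδ]
    linarith
  · have hU := (one_sub_minPayment_le_Uprin_single_one hs hcost).trans
      (Uprin_menu_le_UprinMenu hs hcost le_rfl 1)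
    rw [OPT_expensive_cheap hs hs1 hδ]
    linarith
  · have hU := (one_sub_half_sub_le_Uprin_single_zero hs hcost hcost).trans
      (Uprin_menu_le_UprinMenu hs hcost hcost 0)
    rw [OPT_expensive_expensive hs hs1 hδ]
    linarith [minPayment_le hs]

end Menu

section Randomized

theorem two_fifths_le_add_of_add_mul_le {x y : ℝ} (hs : 0 < s)
    (hx : s / 10 + (1 / 2 - s / 4) * y ≤ (1 / 2 + s / 4) * x)
    (hy : s / 10 + (1 / 2 - s / 4) * x ≤ (1 / 2 + s / 4) * y) : 2 / 5 ≤ x + y :=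
  le_of_mul_le_mul_left (by linarith : s * (2 / 5) ≤ s * (x + y)) hs

theorem minPayment_le_and_sub_le_of_add_mul_le {x y : ℝ} (hs : 0 < s) (hs1 : s ≤ 1) (hy : 0 ≤ y)
    (h : s / 10 + (1 / 2 - s / 4) * y ≤ (1 / 2 + s / 4) * x) :
    minPayment s ≤ x ∧ minPayment s - s / 10 ≤ (1 / 2 - s / 4) * (x + y) := by
  have hq : 0 ≤ 1 / 2 - s / 4 := by linarith
  have hqy := mul_nonneg hq hy
  have hx : minPayment s ≤ x := minPayment_le_of_mul_le hs (by linarith)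
  exact ⟨hx, by linarith [mul_le_mul_of_nonneg_left hx hq, one_half_sub_mul_minPayment hs]⟩

theorem Uprin_weighted_sum_le (hs : 0 < s) (hs' : s ≤ 3 / 4) (hδ : s ^ 2 ≤ δ)
    (hp : IsContract p) :
    Uprin (outcomeProb s) reward p (costs s (s / 10) (s / 10 + δ)) +
      Uprin (outcomeProb s) reward p (costs s (s / 10 + δ) (s / 10)) +
      2 * Uprin (outcomeProb s) reward p (costs s (s / 10 + δ) (s / 10 + δ)) ≤
    2 * (1 - minPayment s) + 2 * (1 - s / 2) - 4 * (s / 9) := by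
  have hs1 : s ≤ 1 := by linarith
  have b_le := minPayment_le hs
  have le_b := le_minPayment hs hs'
  have hT : 0 ≤ (1 / 2 - s / 4) * (p 0 + p 1) :=
    mul_nonneg (by linarith) (add_nonneg (hp 0) (hp 1))
  have hU₃ := Uprin_expensive_expensive_le_or hs hs1 hδ hp
  rcases Uprin_cheap_expensive_le_or hs hs1 hδ hp with hU₁ | ⟨hU₁, h₁⟩ <;>
    rcases Uprin_expensive_cheap_le_or hs hs1 hδ hp with hU₂ | ⟨hU₂, h₂⟩
  · rcases hU₃ with hU₃ | hU₃ <;> linarith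
  · obtain ⟨b_le_p, le_T⟩ := minPayment_le_and_sub_le_of_add_mul_le hs hs1 (hp 0) h₂
    rcases hU₃ with hU₃ | hU₃ <;> linarith
  · obtain ⟨b_le_p, le_T⟩ := minPayment_le_and_sub_le_of_add_mul_le hs hs1 (hp 1) h₁
    rcases hU₃ with hU₃ | hU₃ <;> linarith
  · have le_payment := two_fifths_le_add_of_add_mul_le hs h₁ h₂
    rcases hU₃ with hU₃ | hU₃
    · linarith
    · have : (1 / 2 - s / 4) * (2 / 5) ≤ (1 / 2 - s / 4) * (p 0 + p 1) :=
        mul_le_mul_of_nonneg_left le_payment (by linarith)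
      linarith

theorem le_regretRand (hs : 0 < s) (hs' : s ≤ 3 / 4) (hδ : s ^ 2 ≤ δ) {γ : RandCon (Fin 3)}
    (hγ : γ.valid) : s / 9 ≤ regretRand (outcomeProb s) reward (costSet s δ) γ := by
  have hs1 : s ≤ 1 := by linarith
  refine le_regretRand_of_forall_le_average (w := ![1 / 4, 1 / 4, 1 / 2])
    (k := ![costs s (s / 10) (s / 10 + δ), costs s (s / 10 + δ) (s / 10),
      costs s (s / 10 + δ) (s / 10 + δ)]) (by simp [costSet]) ?_ ?_ ?_ (fun p hp => ?_) hγ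
  · intro t
    fin_cases t <;> norm_num
  · norm_num [Fin.sum_univ_succ]
  · intro t
    fin_cases t <;> simp [costSet]
  · simp only [Fin.sum_univ_three, Matrix.cons_val, OPT_cheap_expensive hs hs1 hδ,
      OPT_expensive_cheap hs hs1 hδ, OPT_expensive_expensive hs hs1 hδ]
    linarith [Uprin_weighted_sum_le hs hs' hδ hp]

end Randomized

end MenuInstance

open MenuInstance in
theorem menus_beat_randomization_instance_general {s δ : ℝ} (hs : 0 < s) (hs' : s ≤ 3 / 4)
    (hδ : s ^ 2 ≤ δ) :
    uncLevel (costSet s δ) = δ ∧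
      (∃ m : Fin 2 → Fin 3 → ℝ, (∀ i, IsContract (m i)) ∧
        regretMenu (outcomeProb s) reward (costSet s δ) m ≤ s / 10) ∧
      ∀ γ : RandCon (Fin 3), γ.valid →
        regretRand (outcomeProb s) reward (costSet s δ) γ ≥ s / 9 :=
  ⟨uncLevel_costSet s ((sq_nonneg s).trans hδ),
    ⟨menu s, isContract_menu hs, regretMenu_menu_le hs (by linarith) hδ⟩,
    fun _ hγ => le_regretRand hs hs' hδ hγ⟩

/-- In the instance `J_δ` (for `δ ∈ (0, 1/64)`): the uncertainty level
is `d(C) = δ`; some menu of two deterministic contracts has regret at most `√δ/10`; and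
every randomized contract has regret at least `√δ/9`. -/
theorem menus_beat_randomization_instance
    (δ : ℝ) (hδ : δ ∈ Set.Ioo (0:ℝ) (1/64))
    (F : Fin 5 → Fin 3 → ℝ)
    (hF : F = ![![(1:ℝ), 0, 0],
                ![1 - Real.sqrt δ, 0, Real.sqrt δ],
                ![0, 1, 0],
                ![0, 1 - Real.sqrt δ, Real.sqrt δ],
                ![1/2 - Real.sqrt δ/4, 1/2 - Real.sqrt δ/4, Real.sqrt δ/2]])
    (r : Fin 3 → ℝ) (hr : r = ![(1:ℝ), 1, 0])
    (C : Set (Fin 5 → ℝ))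
    (hC : C = {![Real.sqrt δ/10, Real.sqrt δ/10, Real.sqrt δ/10 + δ, Real.sqrt δ/10, 0],
               ![Real.sqrt δ/10 + δ, Real.sqrt δ/10, Real.sqrt δ/10, Real.sqrt δ/10, 0],
               ![Real.sqrt δ/10 + δ, Real.sqrt δ/10, Real.sqrt δ/10 + δ, Real.sqrt δ/10, 0]}) :
    uncLevel C = δ ∧
      (∃ m : Fin 2 → Fin 3 → ℝ, (∀ i, IsContract (m i)) ∧
        regretMenu F r C m ≤ Real.sqrt δ / 10) ∧
      ∀ γ : RandCon (Fin 3), γ.valid → regretRand F r C γ ≥ Real.sqrt δ / 9 := by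
  subst hF hr hC
  exact menus_beat_randomization_instance_general (Real.sqrt_pos.2 hδ.1)
    (Real.sqrt_le_iff.2 ⟨by norm_num, by linarith [hδ.2]⟩) (Real.sq_sqrt hδ.1.le).le
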